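/- Let $c$ and $\mu$ be fixed real numbers with $c > 1$ and $0 < \mu < 1$. There exists a constant $C = C(c, \mu) > 0$ such that for every real $X \geq 1$ and every real $\alpha \neq 0$, one has $|I(\alpha)| \leq C |\alpha|^{-1} X^{1 - c}$. -/

import Mathlib

/-- `e(t) = e^{2πit}`. -/
noncomputable def e (t : ℝ) : ℂ := Complex.exp (2 * Real.pi * Complex.I * t)

/-- `I(α) = ∫_{μX}^{X} e(α t^c) dt`. -/
noncomputable def I (c μ X : ℝ) (α : ℝ) : ℂ := ∫ t in (μ * X)..X, e (α * t ^ c)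

/-!
This is an instance of the first derivative test. If `φ'` is monotone and does not vanish, write
`2πi e(φ) = (1/φ') · (e(φ))'` and integrate by parts. Since `|e(φ)| = 1` and `1/φ'` is monotone, the
remaining integral is at most the increment of `1/φ'`; since `1/φ'` has constant sign, boundary
terms and increment add up to exactly twice the larger of the endpoint values of `1/|φ'|`. For
`φ(t) = α t^c` these are `X^(1-c) / |αc|` and `(μX)^(1-c) / |αc|`.
-/

open MeasureTheory Set
open scoped FourierTransform

lemma abs_add_abs_add_abs_sub_eq_two_mul_max {x y : ℝ} (hxy : 0 ≤ x * y) :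
    |x| + |y| + |y - x| = 2 * max |x| |y| := by
  have habs : |y - x| = |(|y| - |x|)| := by
    rcases mul_nonneg_iff.mp hxy with ⟨hx, hy⟩ | ⟨hx, hy⟩
    · rw [abs_of_nonneg hx, abs_of_nonneg hy]
    · rw [abs_of_nonpos hx, abs_of_nonpos hy, neg_sub_neg, abs_sub_comm]
  rw [habs, sup_eq_half_smul_add_add_abs_sub' ℝ, smul_eq_mul, mul_inv_cancel_left₀ two_ne_zero]

lemma mul_pos_of_continuousOn_of_ne_zero {f : ℝ → ℝ} {a b : ℝ} (hf : ContinuousOn f (uIcc a b))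
    (hf0 : ∀ t ∈ uIcc a b, f t ≠ 0) : 0 < f a * f b := by
  by_contra! hneg
  have hzero : (0 : ℝ) ∈ uIcc (f a) (f b) := by
    rw [mem_uIcc]
    exact (mul_nonpos_iff.mp hneg).symm.imp_right And.symm
  obtain ⟨t, ht, hft⟩ := intermediate_value_uIcc hf hzero
  exact hf0 t ht hft

section AbelBound

variable {E : Type*} [NormedAddCommGroup E] [NormedSpace ℝ E] [CompleteSpace E]
  {g g' : ℝ → ℝ} {F f : ℝ → E} {a b M : ℝ}

lemma norm_integral_smul_deriv_le_of_deriv_nonneg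
    (hg : ∀ t ∈ uIcc a b, HasDerivAt g (g' t) t) (hg' : ∀ t ∈ uIcc a b, 0 ≤ g' t)
    (hF : ∀ t ∈ uIcc a b, HasDerivAt F (f t) t) (hf : IntervalIntegrable f volume a b)
    (hM : ∀ t ∈ uIcc a b, ‖F t‖ ≤ M) :
    ‖∫ t in a..b, g t • f t‖ ≤ M * (|g a| + |g b| + |g b - g a|) := by
  have hg'int : IntervalIntegrable g' volume a b :=
    intervalIntegral.intervalIntegrable_deriv_of_nonneg (HasDerivAt.continuousOn hg)
      (fun t ht ↦ hg t (Ioo_subset_Icc_self ht)) fun t ht ↦ hg' t (Ioo_subset_Icc_self ht)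
  have hboundary : ∀ t ∈ uIcc a b, ‖g t • F t‖ ≤ M * |g t| := fun t ht ↦ by
    rw [norm_smul, Real.norm_eq_abs, mul_comm]
    exact mul_le_mul_of_nonneg_right (hM t ht) (abs_nonneg _)
  have hremainder : ‖∫ t in a..b, g' t • F t‖ ≤ M * |g b - g a| := by
    have hle : ∀ t ∈ uIoc a b, ‖g' t • F t‖ ≤ M * g' t := fun t ht ↦ by
      rw [norm_smul, Real.norm_of_nonneg (hg' t (uIoc_subset_uIcc ht)), mul_comm]
      exact mul_le_mul_of_nonneg_right (hM t (uIoc_subset_uIcc ht)) (hg' t (uIoc_subset_uIcc ht))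
    calc ‖∫ t in a..b, g' t • F t‖ ≤ |∫ t in a..b, M * g' t| :=
          intervalIntegral.norm_integral_le_abs_of_norm_le
            (ae_restrict_of_forall_mem measurableSet_uIoc hle) (hg'int.const_mul M)
      _ = M * |g b - g a| := by
          rw [intervalIntegral.integral_const_mul,
            intervalIntegral.integral_eq_sub_of_hasDerivAt hg hg'int, abs_mul,
            abs_of_nonneg ((norm_nonneg _).trans (hM a left_mem_uIcc))]
  calc ‖∫ t in a..b, g t • f t‖
      = ‖g b • F b - g a • F a - ∫ t in a..b, g' t • F t‖ := by
        rw [intervalIntegral.integral_smul_deriv_eq_deriv_smul hg hF hg'int hf]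
    _ ≤ ‖g b • F b‖ + ‖g a • F a‖ + ‖∫ t in a..b, g' t • F t‖ :=
        (norm_sub_le _ _).trans (add_le_add_left (norm_sub_le _ _) _)
    _ ≤ M * |g b| + M * |g a| + M * |g b - g a| :=
        add_le_add_three (hboundary b right_mem_uIcc) (hboundary a left_mem_uIcc) hremainder
    _ = M * (|g a| + |g b| + |g b - g a|) := by ring

lemma norm_integral_smul_deriv_le_two_mul_max
    (hg : ∀ t ∈ uIcc a b, HasDerivAt g (g' t) t)
    (hg' : (∀ t ∈ uIcc a b, 0 ≤ g' t) ∨ ∀ t ∈ uIcc a b, g' t ≤ 0)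
    (hF : ∀ t ∈ uIcc a b, HasDerivAt F (f t) t) (hf : IntervalIntegrable f volume a b)
    (hM : ∀ t ∈ uIcc a b, ‖F t‖ ≤ M) (hsign : 0 ≤ g a * g b) :
    ‖∫ t in a..b, g t • f t‖ ≤ M * (2 * max |g a| |g b|) := by
  rw [← abs_add_abs_add_abs_sub_eq_two_mul_max hsign]
  rcases hg' with hnonneg | hnonpos
  · exact norm_integral_smul_deriv_le_of_deriv_nonneg hg hnonneg hF hf hM
  · have hneg := norm_integral_smul_deriv_le_of_deriv_nonneg (fun t ht ↦ (hg t ht).neg)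
      (fun t ht ↦ neg_nonneg.mpr (hnonpos t ht)) hF hf hM
    simpa only [Pi.neg_apply, neg_smul, intervalIntegral.integral_neg, norm_neg, abs_neg,
      neg_sub_neg, abs_sub_comm (g a) (g b)] using hneg

end AbelBound

lemma e_eq_fourierChar (t : ℝ) : e t = 𝐞 t := by
  rw [e, Real.fourierChar_apply]
  push_cast
  ring_nf

lemma norm_e (t : ℝ) : ‖e t‖ = 1 := by
  rw [e_eq_fourierChar, Circle.norm_coe]

lemma hasDerivAt_e (t : ℝ) : HasDerivAt e (2 * Real.pi * Complex.I * e t) t := by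
  simpa only [← e_eq_fourierChar] using Real.hasDerivAt_fourierChar t

theorem norm_integral_e_comp_le_of_deriv_ne_zero {φ φ' φ'' : ℝ → ℝ} {a b : ℝ}
    (hφ : ∀ t ∈ uIcc a b, HasDerivAt φ (φ' t) t) (hφ' : ∀ t ∈ uIcc a b, HasDerivAt φ' (φ'' t) t)
    (hφ'' : (∀ t ∈ uIcc a b, 0 ≤ φ'' t) ∨ ∀ t ∈ uIcc a b, φ'' t ≤ 0)
    (hφ'0 : ∀ t ∈ uIcc a b, φ' t ≠ 0) :
    ‖∫ t in a..b, e (φ t)‖ ≤ Real.pi⁻¹ * max |φ' a|⁻¹ |φ' b|⁻¹ := by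
  have hφ'cont : ContinuousOn φ' (uIcc a b) := HasDerivAt.continuousOn hφ'
  have hF : ∀ t ∈ uIcc a b,
      HasDerivAt (fun s ↦ e (φ s)) (φ' t • (2 * Real.pi * Complex.I * e (φ t))) t :=
    fun t ht ↦ (hasDerivAt_e (φ t)).scomp t (hφ t ht)
  have hf : IntervalIntegrable (fun t ↦ φ' t • (2 * Real.pi * Complex.I * e (φ t))) volume a b :=
    (hφ'cont.smul (continuousOn_const.mul (HasDerivAt.continuousOn hF))).intervalIntegrable
  have hinv : ∀ t ∈ uIcc a b, HasDerivAt (fun s ↦ (φ' s)⁻¹) (-φ'' t / φ' t ^ 2) t :=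
    fun t ht ↦ (hφ' t ht).fun_inv (hφ'0 t ht)
  have hinv' : (∀ t ∈ uIcc a b, 0 ≤ -φ'' t / φ' t ^ 2) ∨ ∀ t ∈ uIcc a b, -φ'' t / φ' t ^ 2 ≤ 0 :=
    hφ''.symm.imp (fun h t ht ↦ div_nonneg (neg_nonneg.mpr (h t ht)) (sq_nonneg _))
      fun h t ht ↦ div_nonpos_of_nonpos_of_nonneg (neg_nonpos.mpr (h t ht)) (sq_nonneg _)
  have hsign : 0 ≤ (φ' a)⁻¹ * (φ' b)⁻¹ := by
    rw [← mul_inv]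
    exact inv_nonneg.mpr (mul_pos_of_continuousOn_of_ne_zero hφ'cont hφ'0).le
  have habel := norm_integral_smul_deriv_le_two_mul_max hinv hinv' hF hf
    (fun t _ ↦ (norm_e (φ t)).le) hsign
  have hintegral : ∫ t in a..b, (φ' t)⁻¹ • φ' t • (2 * Real.pi * Complex.I * e (φ t)) =
      2 * Real.pi * Complex.I * ∫ t in a..b, e (φ t) := by
    rw [← intervalIntegral.integral_const_mul]
    exact intervalIntegral.integral_congr fun t ht ↦ inv_smul_smul₀ (hφ'0 t ht) _
  have hnorm : ‖(2 * Real.pi * Complex.I : ℂ)‖ = 2 * Real.pi := by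
    simp [abs_of_pos Real.pi_pos]
  rw [hintegral, norm_mul, hnorm, abs_inv, abs_inv] at habel
  rw [inv_mul_eq_div, le_div_iff₀' Real.pi_pos]
  linarith

lemma norm_integral_e_mul_rpow_le {c α a b : ℝ} (hc : c ≠ 0) (hα : α ≠ 0) (ha : 0 < a)
    (hb : 0 < b) :
    ‖∫ t in a..b, e (α * t ^ c)‖ ≤
      (Real.pi * |c|)⁻¹ * |α|⁻¹ * max (a ^ (1 - c)) (b ^ (1 - c)) := by
  have hpos : ∀ t ∈ uIcc a b, 0 < t := fun t ht ↦ (lt_min ha hb).trans_le ht.1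
  have hderiv (p k : ℝ) : ∀ t ∈ uIcc a b,
      HasDerivAt (fun s ↦ k * s ^ p) (k * p * t ^ (p - 1)) t := fun t ht ↦ by
    simpa only [mul_assoc] using
      (Real.hasDerivAt_rpow_const (Or.inl (hpos t ht).ne')).const_mul k
  have hsign : (∀ t ∈ uIcc a b, 0 ≤ α * c * (c - 1) * t ^ (c - 1 - 1)) ∨
      ∀ t ∈ uIcc a b, α * c * (c - 1) * t ^ (c - 1 - 1) ≤ 0 :=
    (le_total 0 (α * c * (c - 1))).imp
      (fun h t ht ↦ mul_nonneg h (Real.rpow_nonneg (hpos t ht).le _))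
      fun h t ht ↦ mul_nonpos_of_nonpos_of_nonneg h (Real.rpow_nonneg (hpos t ht).le _)
  have hne : ∀ t ∈ uIcc a b, α * c * t ^ (c - 1) ≠ 0 := fun t ht ↦
    mul_ne_zero (mul_ne_zero hα hc) (Real.rpow_pos_of_pos (hpos t ht) _).ne'
  have hendpoint : ∀ t : ℝ, 0 < t →
      |α * c * t ^ (c - 1)|⁻¹ = |c|⁻¹ * |α|⁻¹ * t ^ (1 - c) := fun t ht ↦ by
    rw [abs_mul, abs_mul, Real.abs_rpow_of_nonneg ht.le, abs_of_pos ht, mul_inv, mul_inv,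
      ← Real.rpow_neg ht.le, neg_sub, mul_comm |α|⁻¹]
  calc ‖∫ t in a..b, e (α * t ^ c)‖
      ≤ Real.pi⁻¹ * max |α * c * a ^ (c - 1)|⁻¹ |α * c * b ^ (c - 1)|⁻¹ :=
        norm_integral_e_comp_le_of_deriv_ne_zero (hderiv c α) (hderiv (c - 1) (α * c)) hsign hne
    _ = (Real.pi * |c|)⁻¹ * |α|⁻¹ * max (a ^ (1 - c)) (b ^ (1 - c)) := by
        rw [hendpoint a ha, hendpoint b hb, ← mul_max_of_nonneg _ _ (by positivity)]
        ring

theorem stmt_14_general {c μ X α : ℝ} (hc : c ≠ 0) (hμ : 0 < μ) (hX : 0 < X) (hα : α ≠ 0) :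
    ‖I c μ X α‖ ≤ max (μ ^ (1 - c)) 1 / (Real.pi * |c|) * |α|⁻¹ * X ^ (1 - c) := by
  have hmax : max ((μ * X) ^ (1 - c)) (X ^ (1 - c)) = max (μ ^ (1 - c)) 1 * X ^ (1 - c) := by
    rw [Real.mul_rpow hμ.le hX.le, max_mul_of_nonneg _ _ (Real.rpow_nonneg hX.le _), one_mul]
  calc ‖I c μ X α‖
      ≤ (Real.pi * |c|)⁻¹ * |α|⁻¹ * max ((μ * X) ^ (1 - c)) (X ^ (1 - c)) :=
        norm_integral_e_mul_rpow_le hc hα (mul_pos hμ hX) hX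
    _ = max (μ ^ (1 - c)) 1 / (Real.pi * |c|) * |α|⁻¹ * X ^ (1 - c) := by
        rw [hmax]
        ring

theorem stmt_14 (c μ : ℝ) (hc : 1 < c) (hμ1 : 0 < μ) (hμ2 : μ < 1) :
    ∃ C : ℝ, 0 < C ∧
      ∀ X : ℝ, 1 ≤ X → ∀ α : ℝ, α ≠ 0 →
        ‖I c μ X α‖ ≤ C * |α|⁻¹ * X ^ (1 - c) := by
  have hc0 : c ≠ 0 := (zero_lt_one.trans hc).ne'
  exact ⟨max (μ ^ (1 - c)) 1 / (Real.pi * |c|), by positivity, fun _ hX _ hα ↦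
    stmt_14_general hc0 hμ1 (zero_lt_one.trans_le hX) hα⟩
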